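/- Let ρ ∈ (0,1], θ > 0, and let ν be a one-dimensional Γ-grey measure with parameters ρ, θ. Define the polynomials H₀(x) = 1, H₁(x) = x, H₂(x) = x² - θ^{ρ-1}e^{-θ}/Γ(ρ,θ), H₃(x) = x³ - 3x(1 + (1-ρ)θ^{-1}). Then these four polynomials are pairwise orthogonal in L²(ℝ, ν): for all j ≠ k in {0,1,2,3}, ∫_ℝ H_j(x) H_k(x) dν(x) = 0. -/

import Mathlib

open MeasureTheory Real Set

/-- Upper incomplete gamma function `Γ(ρ, x) = ∫_x^∞ e^{-w} w^{ρ-1} dw`. -/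
noncomputable def uGamma (ρ x : ℝ) : ℝ := ∫ w in Set.Ioi x, Real.exp (-w) * w ^ (ρ - 1)

/-- The first four polynomials `H₀, H₁, H₂, H₃` associated to the one-dimensional
Γ-grey measure with parameters `ρ, θ`. -/
noncomputable def greyPoly (ρ θ : ℝ) : Fin 4 → ℝ → ℝ :=
  ![fun _ => 1,
    fun x => x,
    fun x => x ^ 2 - θ ^ (ρ - 1) * Real.exp (-θ) / uGamma ρ θ,
    fun x => x ^ 3 - 3 * x * (1 + (1 - ρ) * θ⁻¹)]

open Filter Topology in
lemma aux_limit {ν : Measure ℝ} {f : ℕ → ℝ → ℝ} {F : ℝ → ℝ} {L : ℝ}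
    (hfi : ∀ n, Integrable (f n) ν) (h0 : ∀ n x, 0 ≤ f n x) (hle : ∀ n x, f n x ≤ F x)
    (hlim : ∀ x, Tendsto (fun n => f n x) atTop (𝓝 (F x)))
    (hL : Tendsto (fun n => ∫ x, f n x ∂ν) atTop (𝓝 L)) :
    Integrable F ν ∧ ∫ x, F x ∂ν = L := by
  have hF : Integrable F ν := by
    refine integrable_of_tendsto (Eventually.of_forall hlim) (fun n => (hfi n).1) ?_
    have : (fun n => ∫⁻ x, ‖f n x‖ₑ ∂ν) = fun n => ENNReal.ofReal (∫ x, f n x ∂ν) := by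
      funext n
      rw [ofReal_integral_eq_lintegral_ofReal (hfi n) (Eventually.of_forall (h0 n))]
      refine lintegral_congr fun x => ?_
      rw [Real.enorm_eq_ofReal (h0 n x)]
    rw [this, (ENNReal.tendsto_ofReal hL).liminf_eq]
    exact ENNReal.ofReal_ne_top
  refine ⟨hF, tendsto_nhds_unique ?_ hL⟩
  refine tendsto_integral_of_dominated_convergence F (fun n => (hfi n).1) hF ?_
    (Eventually.of_forall hlim)
  intro n
  refine Eventually.of_forall fun x => ?_
  rw [Real.norm_eq_abs, abs_of_nonneg (h0 n x)]
  exact hle n x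

lemma uGamma_hasDerivAt {ρ x : ℝ} (hρ : 0 < ρ) (hx : 0 < x) :
    HasDerivAt (uGamma ρ) (-(Real.exp (-x) * x ^ (ρ - 1))) x := by
  have hI : ∀ y : ℝ, 0 ≤ y → IntegrableOn (fun w : ℝ => Real.exp (-w) * w ^ (ρ - 1)) (Ioi y) :=
    fun y hy => (Real.GammaIntegral_convergent hρ).mono_set (Ioi_subset_Ioi hy)
  have hc : ∀ y : ℝ, 0 < y → ContinuousAt (fun w : ℝ => Real.exp (-w) * w ^ (ρ - 1)) y := by
    intro y hy
    exact (by fun_prop : ContinuousAt (fun w : ℝ => Real.exp (-w)) y).mul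
      (continuousAt_id.rpow_const (Or.inl hy.ne'))
  have hd : HasDerivAt (fun u => ∫ w in (0:ℝ)..u, Real.exp (-w) * w ^ (ρ - 1))
      (Real.exp (-x) * x ^ (ρ - 1)) x := by
    refine intervalIntegral.integral_hasDerivAt_right ?_ ?_ (hc x hx)
    · rw [intervalIntegrable_iff_integrableOn_Ioc_of_le hx.le]
      exact (hI 0 le_rfl).mono_set Ioc_subset_Ioi_self
    · exact ContinuousAt.stronglyMeasurableAtFilter isOpen_Ioi
        (fun y hy => hc y hy) x (mem_Ioi.2 hx)
  have h2 := hd.const_sub (uGamma ρ 0)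
  refine h2.congr_of_eventuallyEq ?_
  filter_upwards [lt_mem_nhds hx] with y hy
  have := intervalIntegral.integral_interval_add_Ioi (hI 0 le_rfl) (hI y hy.le)
  simp only [uGamma]
  linarith

open Filter Topology in
lemma uGamma_taylor {ρ θ : ℝ} (hρ : 0 < ρ) (hθ : 0 < θ) :
    Tendsto (fun y => (uGamma ρ (θ + y) - uGamma ρ θ + Real.exp (-θ) * θ ^ (ρ - 1) * y) / y ^ 2)
      (𝓝[>] 0) (𝓝 (Real.exp (-θ) * θ ^ (ρ - 1) * (1 + (1 - ρ) * θ⁻¹) / 2)) := by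
  have hU : ∀ y : ℝ, 0 ≤ y → HasDerivAt (fun y => uGamma ρ (θ + y) - uGamma ρ θ
      + Real.exp (-θ) * θ ^ (ρ - 1) * y)
      (-(Real.exp (-(θ+y)) * (θ+y) ^ (ρ - 1)) + Real.exp (-θ) * θ ^ (ρ - 1)) y := by
    intro y hy
    have h1 := (uGamma_hasDerivAt hρ (by linarith : 0 < θ + y)).comp_const_add θ y
    have h2 := (h1.sub_const (uGamma ρ θ)).add
      ((hasDerivAt_id y).const_mul (Real.exp (-θ) * θ ^ (ρ - 1)))
    rw [mul_one] at h2
    exact h2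
  refine HasDerivAt.lhopital_zero_nhdsGT (g' := fun y => 2 * y)
    (f' := fun y => -(Real.exp (-(θ+y)) * (θ+y) ^ (ρ - 1)) + Real.exp (-θ) * θ ^ (ρ - 1))
    ?_ ?_ ?_ ?_ ?_ ?_
  · filter_upwards [self_mem_nhdsWithin] with y hy using hU y (le_of_lt hy)
  · refine Eventually.of_forall fun y => ?_
    simpa using hasDerivAt_pow 2 y
  · filter_upwards [self_mem_nhdsWithin] with y hy
    have : (0:ℝ) < y := hy
    positivity
  · have := (hU 0 le_rfl).continuousAt.tendsto
    simp only [add_zero, sub_self, mul_zero] at this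
    exact this.mono_left nhdsWithin_le_nhds
  · have : Tendsto (fun y : ℝ => y ^ 2) (𝓝 0) (𝓝 (0 ^ 2)) := (continuous_pow 2).tendsto 0
    simp only [ne_eq, OfNat.ofNat_ne_zero, not_false_eq_true, zero_pow] at this
    exact this.mono_left nhdsWithin_le_nhds
  · have hg : HasDerivAt (fun w : ℝ => Real.exp (-w) * w ^ (ρ - 1))
        (-(Real.exp (-θ) * θ ^ (ρ - 1) * (1 + (1 - ρ) * θ⁻¹))) θ := by
      have h1 : HasDerivAt (fun w : ℝ => Real.exp (-w)) (-Real.exp (-θ)) θ := by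
        simpa using (hasDerivAt_neg θ).exp
      have h2 := Real.hasDerivAt_rpow_const (x := θ) (p := ρ - 1) (Or.inl hθ.ne')
      refine (h1.mul h2).congr_deriv ?_
      rw [Real.rpow_sub_one hθ.ne' (ρ - 1)]
      field_simp
      ring
    have h3 := (hasDerivAt_iff_tendsto_slope_zero.1 hg).mono_left
      (nhdsWithin_mono 0 (fun y (hy : (0:ℝ) < y) => hy.ne'))
    have h4 := h3.const_mul (-(1/2 : ℝ))
    rw [show Real.exp (-θ) * θ ^ (ρ - 1) * (1 + (1 - ρ) * θ⁻¹) / 2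
      = -(1 / 2) * -(Real.exp (-θ) * θ ^ (ρ - 1) * (1 + (1 - ρ) * θ⁻¹)) by ring]
    refine Tendsto.congr (fun y => ?_) h4
    simp only [smul_eq_mul]
    rw [div_eq_mul_inv _ (2 * y), mul_inv]
    ring

open Filter Topology in
theorem stmt_6 (ρ θ : ℝ) (hρ : ρ ∈ Set.Ioc (0 : ℝ) 1) (hθ : 0 < θ)
    (ν : Measure ℝ) [IsProbabilityMeasure ν]
    (hchar : ∀ ξ : ℝ, ∫ x, Complex.exp (Complex.I * ((ξ * x : ℝ) : ℂ)) ∂ν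
        = ((uGamma ρ (θ + ξ ^ 2 / 2) / uGamma ρ θ : ℝ) : ℂ)) :
    ∀ j k : Fin 4, j ≠ k →
      ∫ x, greyPoly ρ θ j x * greyPoly ρ θ k x ∂ν = 0 := by
  -- symmetry of the measure
  have hcf : ∀ t : ℝ, charFun ν t = ((uGamma ρ (θ + t ^ 2 / 2) / uGamma ρ θ : ℝ) : ℂ) := by
    intro t
    rw [← hchar t, charFun_apply_real]
    refine integral_congr_ae (Eventually.of_forall fun x => ?_)
    simp only
    congr 1
    push_cast
    ring
  have hsymm : ν.map (fun x => (-1) * x) = ν := by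
    have : IsProbabilityMeasure (ν.map (fun x => (-1 : ℝ) * x)) :=
      Measure.isProbabilityMeasure_map (by fun_prop)
    refine Measure.ext_of_charFun (funext fun t => ?_)
    rw [charFun_map_mul, hcf, hcf]
    simp
  have hodd : ∀ f : ℝ → ℝ, Continuous f → (∀ x, f (-x) = - f x) → ∫ x, f x ∂ν = 0 := by
    intro f hf h
    have h1 : ∫ x, f x ∂ν = ∫ x, f ((-1) * x) ∂ν := by
      conv_lhs => rw [← hsymm]
      exact integral_map (by fun_prop) hf.aestronglyMeasurable
    simp only [neg_one_mul, h, integral_neg] at h1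
    linarith
  -- cosine transform
  have hcosint : ∀ ξ : ℝ, Integrable (fun x => Real.cos (ξ * x)) ν := by
    intro ξ
    refine Integrable.of_bound (by fun_prop) 1 (Eventually.of_forall fun x => ?_)
    exact Real.abs_cos_le_one _
  have hcos : ∀ ξ : ℝ, ∫ x, Real.cos (ξ * x) ∂ν = uGamma ρ (θ + ξ ^ 2 / 2) / uGamma ρ θ := by
    intro ξ
    have h1 : Integrable (fun x : ℝ => Complex.exp (Complex.I * ((ξ * x : ℝ) : ℂ))) ν := by
      refine Integrable.of_bound (by fun_prop) 1 (Eventually.of_forall fun x => ?_)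
      rw [mul_comm, Complex.norm_exp_ofReal_mul_I]
    have h2 := integral_re h1
    rw [hchar ξ] at h2
    simp only [RCLike.re_to_complex, Complex.ofReal_re] at h2
    rw [← h2]
    refine integral_congr_ae (Eventually.of_forall fun x => ?_)
    simp only
    rw [mul_comm Complex.I, Complex.exp_ofReal_mul_I_re]
  set G := uGamma ρ θ with hG
  have hG0 : G ≠ 0 := by
    intro h0
    have := hcos 0
    simp [h0] at this
  set g := Real.exp (-θ) * θ ^ (ρ - 1) with hg
  set q := fun y => (uGamma ρ (θ + y) - G + g * y) / y ^ 2 with hq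
  have hqlim := uGamma_taylor hρ.1 hθ
  set M := 1 + (1 - ρ) * θ⁻¹ with hM
  change Tendsto q (𝓝[>] 0) (𝓝 (g * M / 2)) at hqlim
  have hexp : ∀ y : ℝ, 0 < y → uGamma ρ (θ + y) = G - g * y + q y * y ^ 2 := by
    intro y hy
    simp only [hq]
    field_simp
    ring
  let a : ℕ → ℝ := fun n => 1 / ((n : ℝ) + 1)
  have ha0 : ∀ n, 0 < a n := fun n => by positivity
  have ha : Tendsto a atTop (𝓝 0) := tendsto_one_div_add_atTop_nhds_zero_nat
  have ha' : Tendsto a atTop (𝓝[≠] 0) :=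
    tendsto_nhdsWithin_iff.2 ⟨ha, Eventually.of_forall fun n => (ha0 n).ne'⟩
  have hy : ∀ c : ℝ, 0 < c → Tendsto (fun n => c * a n ^ 2) atTop (𝓝[>] 0) := by
    intro c hc
    refine tendsto_nhdsWithin_iff.2 ⟨?_, Eventually.of_forall fun n => ?_⟩
    · simpa using (ha.pow 2).const_mul c
    · have := ha0 n
      exact mem_Ioi.2 (by positivity)
  let k : ℕ → ℝ → ℝ := fun n x => Real.sin (a n * x) / a n
  have hkabs : ∀ n x, |k n x| ≤ |x| := by
    intro n x
    simp only [k]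
    rw [abs_div, abs_of_pos (ha0 n), div_le_iff₀ (ha0 n)]
    have := Real.abs_sin_le_abs (x := a n * x)
    rw [abs_mul, abs_of_pos (ha0 n)] at this
    linarith
  have hklim : ∀ x, Tendsto (fun n => k n x) atTop (𝓝 x) := by
    intro x
    have h1 : HasDerivAt (fun t : ℝ => Real.sin (t * x)) x 0 := by
      simpa using ((hasDerivAt_id (0:ℝ)).mul_const x).sin
    have h2 := (hasDerivAt_iff_tendsto_slope_zero.1 h1).comp ha'
    refine h2.congr fun n => ?_
    simp [k, div_eq_inv_mul]
  have hk2 : ∀ n, (fun x => k n x ^ 2) = fun x => (1 - Real.cos (2 * a n * x)) / (2 * a n ^ 2) := by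
    intro n
    funext x
    have := (ha0 n).ne'
    simp only [k]
    rw [show 2 * a n * x = 2 * (a n * x) by ring, Real.cos_two_mul, Real.cos_sq']
    field_simp
    ring
  have hk4 : ∀ n, (fun x => k n x ^ 4) = fun x =>
      (3 - 4 * Real.cos (2 * a n * x) + Real.cos (4 * a n * x)) / (8 * a n ^ 4) := by
    intro n
    funext x
    have := (ha0 n).ne'
    simp only [k]
    rw [show 4 * a n * x = 2 * (2 * (a n * x)) by ring, Real.cos_two_mul,
      show 2 * a n * x = 2 * (a n * x) by ring, Real.cos_two_mul, Real.cos_sq']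
    field_simp
    ring
  have hi2 : ∀ n, Integrable (fun x => 1 - Real.cos (2 * a n * x)) ν :=
    fun n => (integrable_const _).sub (hcosint _)
  have hi4' : ∀ n, Integrable (fun x => 3 - 4 * Real.cos (2 * a n * x)) ν :=
    fun n => (integrable_const _).sub ((hcosint _).const_mul 4)
  have hi4 : ∀ n, Integrable (fun x => 3 - 4 * Real.cos (2 * a n * x)
      + Real.cos (4 * a n * x)) ν := fun n => (hi4' n).add (hcosint _)
  have hm2 : Integrable (fun x => x ^ 2) ν ∧ ∫ x, x ^ 2 ∂ν = g / G := by
    refine aux_limit (f := fun n x => k n x ^ 2) ?_ ?_ ?_ (fun x => (hklim x).pow 2) ?_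
    · intro n
      simp only [hk2]
      exact (hi2 n).div_const _
    · intro n x
      positivity
    · intro n x
      exact sq_le_sq.2 (hkabs n x)
    · have h1 : Tendsto (fun n => (g - q (2 * a n ^ 2) * (2 * a n ^ 2)) / G) atTop
          (𝓝 ((g - g * M / 2 * 0) / G)) :=
        (((hqlim.comp (hy 2 two_pos)).mul ((hy 2 two_pos).mono_right nhdsWithin_le_nhds)).const_sub
          g).div_const G
      rw [mul_zero, sub_zero] at h1
      refine h1.congr fun n => ?_
      have h0 := ha0 n
      simp only [hk2]
      rw [integral_div, integral_sub (integrable_const _) (hcosint _), hcos]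
      rw [show (2 * a n) ^ 2 / 2 = 2 * a n ^ 2 by ring, hexp _ (by positivity)]
      simp only [integral_const, probReal_univ, smul_eq_mul]
      field_simp
      ring
  have hm4 : Integrable (fun x => x ^ 4) ν ∧ ∫ x, x ^ 4 ∂ν = 3 * g * M / G := by
    refine aux_limit (f := fun n x => k n x ^ 4) ?_ ?_ ?_ (fun x => (hklim x).pow 4) ?_
    · intro n
      simp only [hk4]
      exact (hi4 n).div_const _
    · intro n x
      positivity
    · intro n x
      have := pow_le_pow_left₀ (abs_nonneg _) (hkabs n x) 4
      rwa [(by decide : Even 4).pow_abs, (by decide : Even 4).pow_abs] at this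
    · have h1 : Tendsto (fun n => (8 * q (8 * a n ^ 2) - 2 * q (2 * a n ^ 2)) / G) atTop
          (𝓝 ((8 * (g * M / 2) - 2 * (g * M / 2)) / G)) :=
        (((hqlim.comp (hy 8 (by norm_num))).const_mul 8).sub
          ((hqlim.comp (hy 2 two_pos)).const_mul 2)).div_const G
      rw [show (8 * (g * M / 2) - 2 * (g * M / 2)) / G = 3 * g * M / G by ring] at h1
      refine h1.congr fun n => ?_
      have h0 := ha0 n
      simp only [hk4]
      rw [integral_div, integral_add (hi4' n) (hcosint _),
        integral_sub (integrable_const _) ((hcosint _).const_mul 4), integral_const_mul,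
        hcos, hcos]
      rw [show (2 * a n) ^ 2 / 2 = 2 * a n ^ 2 by ring, hexp (2 * a n ^ 2) (by positivity),
        show (4 * a n) ^ 2 / 2 = 8 * a n ^ 2 by ring, hexp (8 * a n ^ 2) (by positivity)]
      simp only [integral_const, probReal_univ, smul_eq_mul]
      field_simp
      ring
  have e02 : ∫ x, (x ^ 2 - θ ^ (ρ - 1) * Real.exp (-θ) / G) ∂ν = 0 := by
    rw [integral_sub hm2.1 (integrable_const _), hm2.2]
    simp [hg, mul_comm]
  have e13 : ∫ x, x * (x ^ 3 - 3 * x * M) ∂ν = 0 := by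
    have : (fun x : ℝ => x * (x ^ 3 - 3 * x * M)) = fun x => x ^ 4 - 3 * M * x ^ 2 := by
      funext x
      ring
    rw [this, integral_sub hm4.1 (hm2.1.const_mul _), integral_const_mul, hm2.2, hm4.2]
    ring
  have key : ∀ j k : Fin 4, j < k →
      ∫ x, greyPoly ρ θ j x * greyPoly ρ θ k x ∂ν = 0 := by
    intro j k hjk
    fin_cases j <;> fin_cases k <;> first | (exact absurd hjk (by decide)) | skip
    · simp only [greyPoly]
      exact hodd (fun x => 1 * x) (by fun_prop) (fun x => by ring)
    · simpa [greyPoly] using e02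
    · exact hodd (fun x => 1 * (x ^ 3 - 3 * x * M)) (by fun_prop) (fun x => by ring)
    · exact hodd (fun x => x * (x ^ 2 - θ ^ (ρ - 1) * Real.exp (-θ) / G)) (by fun_prop)
        (fun x => by ring)
    · exact e13
    · exact hodd (fun x => (x ^ 2 - θ ^ (ρ - 1) * Real.exp (-θ) / G) * (x ^ 3 - 3 * x * M))
        (by fun_prop) (fun x => by ring)
  intro j k hjk
  rcases lt_or_gt_of_ne hjk with h | h
  · exact key j k h
  · rw [← key k j h]
    simp only [mul_comm]
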